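/- arXiv:2204.01158 — 5 statements merged into one kernel-verified Lean document; each statement's English description precedes it below -/
import Mathlib

section
/- Let M be a field, σ : M → M a ring homomorphism, and L a subfield of M with σ(L) ⊆ L. Assume that M is a finite extension of L and that L is a finite extension of its subfield σ(L). Then M is a finite extension of σ(M) and [M : σ(M)] = [L : σ(L)]; moreover the separable degrees agree, [M : σ(M)]_sep = [L : σ(L)]_sep (equivalently, the purely inseparable degrees agree). (Part (1) of the lemma on the explicit definable measure on varieties.) -/
open scoped Classical

/-- The degree `[E : F]` of an extension of subfields of a common field,
via the inclusion-induced algebra structure (0 if `F ≰ E`). -/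
noncomputable def subfieldDeg {M : Type*} [Field M] (F E : Subfield M) : ℕ :=
  if h : F ≤ E then
    letI : Algebra F E := (Subfield.inclusion h).toAlgebra
    Module.finrank F E
  else 0

/-- The separable degree `[E : F]_sep` of an extension of subfields of a common
field (0 if `F ≰ E`). -/
noncomputable def subfieldSepDeg {M : Type*} [Field M] (F E : Subfield M) : ℕ :=
  if h : F ≤ E then
    letI : Algebra F E := (Subfield.inclusion h).toAlgebra
    Field.finSepDegree F E
  else 0

/-- `F ≤ E` and `E` is finite over `F` (for subfields of a common field). -/
def subfieldFinite {M : Type*} [Field M] (F E : Subfield M) : Prop :=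
  ∃ h : F ≤ E,
    letI : Algebra F E := (Subfield.inclusion h).toAlgebra
    FiniteDimensional F E

theorem finSepDegree_eq_of_ringEquiv_aux {K K₂ E E₂ : Type*} [Field K] [Field K₂] [Field E] [Field E₂]
    [Algebra K E] [Algebra K₂ E₂] [Algebra.IsAlgebraic K₂ E₂] (e : K ≃+* K₂) (f : E ≃+* E₂)
    (h : ∀ x, f (algebraMap K E x) = algebraMap K₂ E₂ (e x)) :
    Field.finSepDegree K E = Field.finSepDegree K₂ E₂ := by
  letI : Algebra K K₂ := e.toRingHom.toAlgebra
  letI : Algebra K E₂ := ((algebraMap K₂ E₂).comp e.toRingHom).toAlgebra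
  haveI : IsScalarTower K K₂ E₂ := IsScalarTower.of_algebraMap_eq (fun _ => rfl)
  have h1 : Field.finSepDegree K E = Field.finSepDegree K E₂ :=
    Field.finSepDegree_eq_of_equiv K E E₂ (AlgEquiv.ofRingEquiv (f := f) h)
  have h2 : Field.finSepDegree K K₂ = 1 := by
    rw [← Field.finSepDegree_eq_of_equiv K K K₂ (AlgEquiv.ofRingEquiv (f := e) (fun _ => rfl)),
      Field.finSepDegree_self]
  have h3 := Field.finSepDegree_mul_finSepDegree_of_isAlgebraic K K₂ E₂
  rw [h1, ← h3, h2, one_mul]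

theorem tower_aux {K A B M : Type*} [Field K] [Field A] [Field B] [Field M]
    [Algebra K A] [Algebra K B] [Algebra K M] [Algebra A M] [Algebra B M]
    [IsScalarTower K A M] [IsScalarTower K B M] [FiniteDimensional A M] [FiniteDimensional K A]
    (eA : A ≃+* K) (eM : M ≃+* B) (h : ∀ x, eM (algebraMap A M x) = algebraMap K B (eA x)) :
    FiniteDimensional B M ∧ Module.finrank B M = Module.finrank K A ∧
      Field.finSepDegree B M = Field.finSepDegree K A := by
  haveI : FiniteDimensional K M := FiniteDimensional.trans K A M
  haveI : FiniteDimensional B M := FiniteDimensional.right K B M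
  haveI : FiniteDimensional K B := FiniteDimensional.left K B M
  refine ⟨inferInstance, ?_, ?_⟩
  · have h1 : Module.finrank A M = Module.finrank K B :=
      Algebra.finrank_eq_of_equiv_equiv eA eM (by ext x; simp [h])
    have h2 := Module.finrank_mul_finrank K A M
    have h3 := Module.finrank_mul_finrank K B M
    have h4 : 0 < Module.finrank K B := Module.finrank_pos
    rw [h1, ← h3, mul_comm] at h2
    exact (Nat.eq_of_mul_eq_mul_left h4 h2).symm
  · have h1 : Field.finSepDegree A M = Field.finSepDegree K B :=
      finSepDegree_eq_of_ringEquiv_aux eA eM h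
    have h2 := Field.finSepDegree_mul_finSepDegree_of_isAlgebraic K A M
    have h3 := Field.finSepDegree_mul_finSepDegree_of_isAlgebraic K B M
    have h4 : 0 < Field.finSepDegree K B := Nat.pos_of_ne_zero (NeZero.ne _)
    rw [h1, ← h3, mul_comm] at h2
    exact (Nat.eq_of_mul_eq_mul_left h4 h2).symm

/-- if `σ : M → M` is a ring homomorphism, `L` a subfield with
`σ(L) ⊆ L`, `M` finite over `L` and `L` finite over `σ(L)`, then `M` is finite
over `σ(M)`, with `[M : σ(M)] = [L : σ(L)]` and `[M : σ(M)]_sep = [L : σ(L)]_sep`. -/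
theorem explicit_measure_part1 {M : Type*} [Field M] (σ : M →+* M) (L : Subfield M)
    (hσL : L.map σ ≤ L)
    (hML : FiniteDimensional L M)
    (hLσL : subfieldFinite (L.map σ) L) :
    FiniteDimensional σ.fieldRange M ∧
      Module.finrank σ.fieldRange M = subfieldDeg (L.map σ) L ∧
      Field.finSepDegree σ.fieldRange M = subfieldSepDeg (L.map σ) L := by
  obtain ⟨hle, hfin⟩ := hLσL
  letI : Algebra (L.map σ) L := (Subfield.inclusion hle).toAlgebra
  have hK : L.map σ ≤ σ.fieldRange := by
    rintro _ ⟨x, _, rfl⟩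
    exact ⟨x, rfl⟩
  letI : Algebra (L.map σ) σ.fieldRange := (Subfield.inclusion hK).toAlgebra
  haveI : FiniteDimensional (L.map σ) L := hfin
  haveI : IsScalarTower (L.map σ) L M := IsScalarTower.of_algebraMap_eq (fun _ => rfl)
  haveI : IsScalarTower (L.map σ) σ.fieldRange M := IsScalarTower.of_algebraMap_eq (fun _ => rfl)
  let gA : L →+* L.map σ := (σ.comp L.subtype).codRestrict (L.map σ) (fun x => ⟨x, x.2, rfl⟩)
  have hA : Function.Bijective gA := by
    refine ⟨gA.injective, ?_⟩
    rintro ⟨_, x, hx, rfl⟩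
    exact ⟨⟨x, hx⟩, rfl⟩
  have hB : Function.Bijective σ.rangeRestrictField := by
    refine ⟨σ.rangeRestrictField.injective, ?_⟩
    rintro ⟨_, x, rfl⟩
    exact ⟨x, rfl⟩
  have key := tower_aux (K := L.map σ) (A := L) (B := σ.fieldRange) (M := M)
    (RingEquiv.ofBijective gA hA) (RingEquiv.ofBijective σ.rangeRestrictField hB) (fun _ => rfl)
  rw [subfieldDeg, subfieldSepDeg, dif_pos hle, dif_pos hle]
  exact key
end

section
/- Let K be a field with an automorphism σ and A a subfield with σ(A) = A. Let L be a subfield of K with σ(L) = L which has finite transcendence degree over A and is finitely generated over A as an inversive difference field, i.e. L is the smallest subfield of K containing A and some finite set and closed under σ and σ^{-1}. Let M ⊆ K be a finite field extension of L with σ(M) ⊆ M. Then σ(M) = M, and there exist subfields L₀ ⊆ L and M₀ ⊆ M with σ(L₀) ⊆ L₀ and σ(M₀) ⊆ M₀, each of which is the smallest σ-stable subfield of K containing A and some finite set, such that M₀ is a finite field extension of L₀, the smallest subfield containing L₀ closed under σ and σ^{-1} equals L, and M₀·L = M, so that the smallest subfield containing M₀ closed under σ and σ^{-1} equals M. (Part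 (2) of the lemma on the explicit definable measure on varieties.) -/
/-- The smallest `σ`-stable subfield of `K` containing the set `s`
(the difference subfield generated by `s`). -/
def diffGenBy {K : Type*} [Field K] (σ : K ≃+* K) (s : Set K) : Subfield K :=
  sInf {E : Subfield K | s ⊆ E ∧ ∀ x ∈ E, σ x ∈ E}

/-- The smallest subfield of `K` containing the set `s` and closed under `σ`
and `σ⁻¹` (the inversive difference subfield generated by `s`). -/
def invDiffGenBy {K : Type*} [Field K] (σ : K ≃+* K) (s : Set K) : Subfield K :=
  sInf {E : Subfield K | s ⊆ E ∧ (∀ x ∈ E, σ x ∈ E) ∧ ∀ x ∈ E, σ.symm x ∈ E}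

lemma aux_integral {K : Type*} [Field K] (L : Subfield K) (x : K) (h : IsIntegral L x) :
    ∃ c : Finset K, (c : Set K) ⊆ L ∧ ∀ F : Subfield K, (c : Set K) ⊆ F → IsIntegral F x := by
  classical
  obtain ⟨p, hp, hx⟩ := h
  refine ⟨(p.map (algebraMap L K)).coeffs, ?_, ?_⟩
  · intro y hy
    obtain ⟨n, -, rfl⟩ := Polynomial.mem_coeffs_iff.1 (Finset.mem_coe.1 hy)
    rw [Polynomial.coeff_map]
    exact (p.coeff n).2
  · intro F hF
    have hl : p.map (algebraMap L K) ∈ Polynomial.lifts (algebraMap F K) := by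
      rw [Polynomial.lifts_iff_coeff_lifts]
      intro n
      by_cases h0 : (p.map (algebraMap L K)).coeff n = 0
      · exact ⟨0, by rw [h0, map_zero]⟩
      · exact ⟨⟨_, hF (Finset.mem_coe.2 (Polynomial.coeff_mem_coeffs h0))⟩, rfl⟩
    obtain ⟨q, hq, -, hqm⟩ :=
      Polynomial.lifts_and_natDegree_eq_and_monic hl (hp.map _)
    refine ⟨q, hqm, ?_⟩
    rw [Polynomial.eval₂_eq_eval_map, hq, ← Polynomial.eval₂_eq_eval_map]
    exact hx

lemma aux_span {K : Type*} [Field K] (L : Subfield K) (B : Set K) (x : K)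
    (h : x ∈ Submodule.span L B) :
    ∃ c : Finset K, (c : Set K) ⊆ L ∧
      ∀ F : Subfield K, (c : Set K) ⊆ F → x ∈ F ⊔ Subfield.closure B := by
  classical
  induction h using Submodule.span_induction with
  | mem x hx =>
    exact ⟨∅, by simp, fun F _ => (le_sup_right : Subfield.closure B ≤ _) (Subfield.subset_closure hx)⟩
  | zero => exact ⟨∅, by simp, fun F _ => zero_mem _⟩
  | add x y _ _ hx hy =>
    obtain ⟨c, hc, h1⟩ := hx
    obtain ⟨d, hd, h2⟩ := hy
    refine ⟨c ∪ d, by simp [hc, hd], fun F hF => ?_⟩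
    rw [Finset.coe_union, Set.union_subset_iff] at hF
    exact add_mem (h1 F hF.1) (h2 F hF.2)
  | smul a x _ hx =>
    obtain ⟨c, hc, h1⟩ := hx
    refine ⟨insert (a : K) c, by simp [Set.insert_subset_iff, hc], fun F hF => ?_⟩
    rw [Finset.coe_insert, Set.insert_subset_iff] at hF
    exact mul_mem ((le_sup_left : F ≤ _) hF.1) (h1 F hF.2)

lemma aux_union {K : Type*} [Field K] (L : Subfield K) (B : Finset K)
    (P : K → Subfield K → Prop)
    (h : ∀ b ∈ B, ∃ c : Finset K, (c : Set K) ⊆ L ∧ ∀ F : Subfield K, (c : Set K) ⊆ F → P b F) :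
    ∃ c : Finset K, (c : Set K) ⊆ L ∧ ∀ F : Subfield K, (c : Set K) ⊆ F → ∀ b ∈ B, P b F := by
  classical
  choose! c hc hP using h
  refine ⟨B.biUnion c, ?_, ?_⟩
  · intro x hx
    obtain ⟨b, hb, hx⟩ := Finset.mem_biUnion.1 (Finset.mem_coe.1 hx)
    exact hc b hb hx
  · intro F hF b hb
    exact hP b hb F fun x hx => hF (Finset.mem_coe.2 (Finset.mem_biUnion.2 ⟨b, hb, hx⟩))

lemma aux_finite {K : Type*} [Field K] (F : Subfield K) (B : Finset K)
    (hB : ∀ b ∈ B, IsIntegral F b) (N : Subfield K) (hN : N = F ⊔ Subfield.closure (B : Set K))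
    (h : F ≤ N) :
    letI : Algebra F N := (Subfield.inclusion h).toAlgebra
    FiniteDimensional F N := by
  letI : Algebra F N := (Subfield.inclusion h).toAlgebra
  have hfd : FiniteDimensional F (IntermediateField.adjoin F (B : Set K)) :=
    IntermediateField.finiteDimensional_adjoin fun x hx => hB x hx
  have hle : N ≤ (IntermediateField.adjoin F (B : Set K)).toSubfield := by
    rw [hN]
    refine sup_le ?_ (Subfield.closure_le.2 (IntermediateField.subset_adjoin F _))
    intro x hx
    exact (IntermediateField.adjoin F (B : Set K)).algebraMap_mem ⟨x, hx⟩
  let f : N →ₗ[F] IntermediateField.adjoin F (B : Set K) :=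
    { toFun := fun x => ⟨x, hle x.2⟩
      map_add' := fun _ _ => rfl
      map_smul' := fun _ _ => rfl }
  refine FiniteDimensional.of_injective f ?_
  intro x y hxy
  have h2 : (f x : K) = (f y : K) := by rw [hxy]
  exact Subtype.ext h2

lemma aux_spanning {K : Type*} [Field K] (L M : Subfield K) (hLM : L ≤ M)
    (hfin : letI : Algebra L M := (Subfield.inclusion hLM).toAlgebra
      FiniteDimensional L M) :
    ∃ B : Finset K, ∀ x, x ∈ Submodule.span L (B : Set K) ↔ x ∈ M := by
  classical
  letI : Algebra L M := (Subfield.inclusion hLM).toAlgebra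
  let f : M →ₗ[L] K :=
    { toFun := fun x => x
      map_add' := fun _ _ => rfl
      map_smul' := fun _ _ => rfl }
  have hfin' : FiniteDimensional L M := hfin
  obtain ⟨B, hB⟩ := (Module.finite_def.1 hfin').map f
  refine ⟨B, fun x => ?_⟩
  rw [hB]
  constructor
  · rintro ⟨y, -, rfl⟩
    exact y.2
  · intro hx
    exact ⟨⟨x, hx⟩, trivial, rfl⟩

lemma aux_surj {K : Type*} [Field K] (σ : K ≃+* K) (L M : Subfield K) (hLM : L ≤ M)
    (hL : L.map (σ : K →+* K) = L) (hM : M.map (σ : K →+* K) ≤ M)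
    (B : Finset K) (hB : ∀ x, x ∈ Submodule.span L (B : Set K) ↔ x ∈ M) :
    M ≤ M.map (σ : K →+* K) := by
  have hσL : ∀ x ∈ L, σ x ∈ L := fun x hx => by
    rw [← hL]; exact ⟨x, hx, rfl⟩
  have hσL' : ∀ x ∈ L, σ.symm x ∈ L := fun x hx => by
    rw [← hL] at hx
    obtain ⟨y, hy, rfl⟩ := hx
    simpa using hy
  let V : Submodule L K := Submodule.span L (B : Set K)
  let W : Submodule L K :=
    { carrier := {x | σ.symm x ∈ M}
      add_mem' := fun {x y} hx hy => by
        simp only [Set.mem_ofPred_eq, map_add] at *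
        exact add_mem hx hy
      zero_mem' := by simp
      smul_mem' := fun a x hx => by
        simp only [Set.mem_ofPred_eq] at *
        have : a • x = (a : K) * x := rfl
        rw [this, map_mul]
        have h1 : σ.symm (a : K) ∈ M := by
          exact hLM (hσL' a a.2)
        exact mul_mem h1 hx }
  have hWV : W ≤ V := fun x hx => (hB x).2 (hM ⟨σ.symm x, hx, by simp⟩)
  let j : V ≃+ W :=
    { toFun := fun x => ⟨σ x, by
        have := (hB _).1 x.2
        change σ.symm (σ x) ∈ M
        simpa using this⟩
      invFun := fun x => ⟨σ.symm x, (hB _).2 x.2⟩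
      left_inv := fun x => by simp
      right_inv := fun x => by simp
      map_add' := fun x y => by ext; simp }
  have hr : Module.rank L V = Module.rank L W := by
    refine rank_eq_of_equiv_equiv (fun a : L => (⟨σ a, hσL a a.2⟩ : L)) j ?_ ?_
    · constructor
      · intro a b hab
        exact Subtype.ext (σ.injective (congrArg Subtype.val hab))
      · intro a
        exact ⟨⟨σ.symm a, hσL' a a.2⟩, by simp⟩
    · intro a x
      apply Subtype.ext
      exact map_mul σ (a : K) (x : K)
  have : FiniteDimensional L V := FiniteDimensional.span_finset L B
  have hEq : W = V := Submodule.eq_of_le_of_finrank_eq hWV (by simp [Module.finrank, hr])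
  intro x hx
  have : x ∈ W := by rw [hEq]; exact (hB x).2 hx
  exact ⟨σ.symm x, this, by simp⟩

/-- if `L` is an inversive difference subfield of `(K, σ)` of finite
transcendence degree over `A`, finitely generated over `A` as inversive difference
field, and `M ⊇ L` is a finite field extension with `σ(M) ⊆ M`, then `σ(M) = M`
and there are finitely generated difference subfields `L₀ ⊆ L`, `M₀ ⊆ M` with
`M₀/L₀` finite, `L₀^{inv} = L`, `M₀·L = M` and `M₀^{inv} = M`. -/
theorem explicit_measure_part2 {K : Type*} [Field K] (σ : K ≃+* K) (A : Subfield K)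
    (hA : A.map (σ : K →+* K) = A)
    (L : Subfield K) (hLinv : L.map (σ : K →+* K) = L)
    (hLtrdeg : ∃ t : Finset K, ∀ x ∈ L, IsAlgebraic ↥(A ⊔ Subfield.closure (t : Set K)) x)
    (hLfg : ∃ s : Finset K, L = invDiffGenBy σ ((A : Set K) ∪ ↑s))
    (M : Subfield K) (hLM : L ≤ M) (hσM : M.map (σ : K →+* K) ≤ M)
    (hfin : letI : Algebra L M := (Subfield.inclusion hLM).toAlgebra
      FiniteDimensional L M) :
    M.map (σ : K →+* K) = M ∧
    ∃ (L₀ M₀ : Subfield K) (s t : Finset K),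
      L₀ ≤ L ∧ M₀ ≤ M ∧
      L₀ = diffGenBy σ ((A : Set K) ∪ ↑s) ∧
      M₀ = diffGenBy σ ((A : Set K) ∪ ↑t) ∧
      (∃ h : L₀ ≤ M₀,
        letI : Algebra L₀ M₀ := (Subfield.inclusion h).toAlgebra
        FiniteDimensional L₀ M₀) ∧
      invDiffGenBy σ (L₀ : Set K) = L ∧
      M₀ ⊔ L = M ∧
      invDiffGenBy σ (M₀ : Set K) = M := by
  classical
  obtain ⟨s, hs⟩ := hLfg
  obtain ⟨B, hB⟩ := aux_spanning L M hLM hfin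
  have hMM : M.map (σ : K →+* K) = M :=
    le_antisymm hσM (aux_surj σ L M hLM hLinv hσM B hB)
  refine ⟨hMM, ?_⟩
  have hst : ∀ N : Subfield K, N.map (σ : K →+* K) = N →
      (∀ x ∈ N, σ x ∈ N) ∧ (∀ x ∈ N, σ.symm x ∈ N) := by
    intro N hN
    constructor
    · intro x hx
      rw [← hN]
      exact ⟨x, hx, rfl⟩
    · intro x hx
      rw [← hN] at hx
      obtain ⟨y, hy, rfl⟩ := hx
      simpa using hy
  have hBM : ∀ b ∈ B, b ∈ M := fun b hb => (hB b).1 (Submodule.subset_span hb)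
  have hint : ∀ b ∈ B, IsIntegral L b := by
    intro b hb
    letI : Algebra L M := (Subfield.inclusion hLM).toAlgebra
    have hfin' : FiniteDimensional L M := hfin
    obtain ⟨p, hp, h⟩ := Algebra.IsIntegral.isIntegral (R := L) (⟨b, hBM b hb⟩ : M)
    refine ⟨p, hp, ?_⟩
    have h2 := congrArg M.subtype h
    rw [Polynomial.hom_eval₂, map_zero] at h2
    exact h2
  obtain ⟨c, hcL, hc⟩ := aux_union L B (fun b F => IsIntegral F b)
    (fun b hb => aux_integral L b (hint b hb))
  obtain ⟨d, hdL, hd⟩ := aux_union L B (fun b F => σ b ∈ F ⊔ Subfield.closure (B : Set K))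
    (fun b hb => aux_span L B (σ b) ((hB _).2 ((hst M hMM).1 b (hBM b hb))))
  have hAsL : (A : Set K) ∪ ↑s ⊆ L := by
    rw [hs]
    intro x hx
    refine Subfield.mem_sInf.2 fun E hE => hE.1 hx
  have dsub : ∀ S : Set K, S ⊆ diffGenBy σ S := fun S x hx =>
    Subfield.mem_sInf.2 fun E hE => hE.1 hx
  have dst : ∀ (S : Set K), ∀ x ∈ diffGenBy σ S, σ x ∈ diffGenBy σ S := fun S x hx =>
    Subfield.mem_sInf.2 fun E hE => hE.2 x (Subfield.mem_sInf.1 hx E hE)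
  have dle : ∀ (S : Set K) (N : Subfield K), S ⊆ N → (∀ x ∈ N, σ x ∈ N) → diffGenBy σ S ≤ N :=
    fun S N h1 h2 => sInf_le ⟨h1, h2⟩
  have isub : ∀ S : Set K, S ⊆ invDiffGenBy σ S := fun S x hx =>
    Subfield.mem_sInf.2 fun E hE => hE.1 hx
  have ile : ∀ (S : Set K) (N : Subfield K), S ⊆ N → N.map (σ : K →+* K) = N →
      invDiffGenBy σ S ≤ N :=
    fun S N h1 h2 => sInf_le ⟨h1, hst N h2⟩
  have imono : ∀ S T : Set K, S ⊆ invDiffGenBy σ T → invDiffGenBy σ S ≤ invDiffGenBy σ T := by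
    intro S T h
    refine sInf_le ⟨h, fun x hx => ?_, fun x hx => ?_⟩
    · exact Subfield.mem_sInf.2 fun E hE => hE.2.1 x (Subfield.mem_sInf.1 hx E hE)
    · exact Subfield.mem_sInf.2 fun E hE => hE.2.2 x (Subfield.mem_sInf.1 hx E hE)
  obtain ⟨L₀, hL₀⟩ : ∃ L₀, L₀ = diffGenBy σ ((A : Set K) ∪ ↑(s ∪ (c ∪ d))) := ⟨_, rfl⟩
  have hgen : (A : Set K) ∪ ↑(s ∪ (c ∪ d)) ⊆ L₀ := by rw [hL₀]; exact dsub _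
  have hL₀σ : ∀ x ∈ L₀, σ x ∈ L₀ := by rw [hL₀]; exact dst _
  have hL₀L : L₀ ≤ L := by
    rw [hL₀]
    refine dle _ _ ?_ (hst L hLinv).1
    rw [Finset.coe_union, Finset.coe_union, ← Set.union_assoc]
    exact Set.union_subset hAsL (Set.union_subset hcL hdL)
  have hcF : (c : Set K) ⊆ L₀ := fun x hx => hgen (by
    have := Finset.mem_coe.1 hx
    simp [this])
  have hdF : (d : Set K) ⊆ L₀ := fun x hx => hgen (by
    have := Finset.mem_coe.1 hx
    simp [this])
  have hAsF : (A : Set K) ∪ ↑s ⊆ L₀ := fun x hx => hgen (by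
    rcases hx with hx | hx
    · exact Or.inl hx
    · have := Finset.mem_coe.1 hx
      simp [this])
  obtain ⟨M₀, hM₀⟩ : ∃ M₀, M₀ = L₀ ⊔ Subfield.closure (B : Set K) := ⟨_, rfl⟩
  have hLM₀ : L₀ ≤ M₀ := by rw [hM₀]; exact le_sup_left
  have hBM₀ : (B : Set K) ⊆ M₀ := by
    rw [hM₀]
    exact Subfield.subset_closure.trans (le_sup_right : Subfield.closure (B : Set K) ≤ _)
  have hM₀M : M₀ ≤ M := by
    rw [hM₀]
    exact sup_le (hL₀L.trans hLM) (Subfield.closure_le.2 hBM)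
  have hM₀σ : ∀ x ∈ M₀, σ x ∈ M₀ := by
    have : M₀ ≤ M₀.comap (σ : K →+* K) := by
      conv_lhs => rw [hM₀]
      refine sup_le (fun x hx => hLM₀ (hL₀σ x hx)) (Subfield.closure_le.2 fun b hb => ?_)
      have := hd L₀ hdF b hb
      rw [← hM₀] at this
      exact this
    exact this
  have hspan : ∀ N : Subfield K, L ≤ N → (B : Set K) ⊆ N → M ≤ N := by
    intro N h1 h2 x hx
    replace hx := (hB x).2 hx
    induction hx using Submodule.span_induction with
    | mem x hx => exact h2 hx
    | zero => exact zero_mem _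
    | add x y _ _ hx hy => exact add_mem hx hy
    | smul a x _ hx => exact mul_mem (h1 a.2) hx
  have hLinv₀ : invDiffGenBy σ (L₀ : Set K) = L := by
    refine le_antisymm (ile _ _ hL₀L hLinv) ?_
    conv_lhs => rw [hs]
    exact imono _ _ (hAsF.trans (isub _))
  refine ⟨L₀, M₀, s ∪ (c ∪ d), (s ∪ (c ∪ d)) ∪ B, hL₀L, hM₀M, hL₀, ?_, ⟨hLM₀, ?_⟩, hLinv₀, ?_, ?_⟩
  · apply le_antisymm
    · rw [hM₀]
      refine sup_le ?_ (Subfield.closure_le.2 ?_)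
      · rw [hL₀]
        refine dle _ _ (Set.Subset.trans ?_ (dsub _)) (dst _)
        rw [Finset.coe_union _ B, ← Set.union_assoc]
        exact Set.subset_union_left
      · refine Set.Subset.trans ?_ (dsub _)
        rw [Finset.coe_union _ B, ← Set.union_assoc]
        exact Set.subset_union_right
    · refine dle _ _ ?_ hM₀σ
      rw [Finset.coe_union _ B, ← Set.union_assoc]
      exact Set.union_subset (hgen.trans hLM₀) hBM₀
  · exact aux_finite L₀ B (hc L₀ hcF) M₀ hM₀ hLM₀
  · exact le_antisymm (sup_le hM₀M hLM)
      (hspan _ le_sup_right (hBM₀.trans (le_sup_left : M₀ ≤ _)))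
  · refine le_antisymm (ile _ _ hM₀M hMM) (hspan _ ?_ (hBM₀.trans (isub _)))
    conv_lhs => rw [← hLinv₀]
    exact imono _ _ (Set.Subset.trans hLM₀ (isub _))
end

section
/- Let K be a field, B a subfield of K, and E, F subfields of K containing B which are linearly disjoint over B, with E algebraic over B. Let Ω be a field and let f : E → Ω and g : F → Ω be ring homomorphisms agreeing on B. Then there is a unique ring homomorphism h from the compositum E·F ⊆ K to Ω with h restricting to f on E and to g on F. (The amalgamation step used in the Claim of the Stochastic Independence Theorem, and in the proof of the lemma that only finite extensions necessary for φ matter.) -/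
/-- Subfields `E` and `F` of `K` containing `C` are linearly disjoint over `C`
if the multiplication map `E ⊗[C] F → K` is injective. -/
def LinearDisjointOver {K : Type*} [Field K] (C E F : Subfield K) : Prop :=
  (Submodule.span C (E : Set K)).LinearDisjoint (Submodule.span C (F : Set K))

open scoped TensorProduct

theorem ringHom_sup_ext {K : Type*} [Field K] {E F : Subfield K} {Ω : Type*} [Field Ω]
    (h h' : ↥(E ⊔ F) →+* Ω)
    (h1 : h.comp (Subfield.inclusion (le_sup_left : E ≤ E ⊔ F)) =
      h'.comp (Subfield.inclusion (le_sup_left : E ≤ E ⊔ F)))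
    (h2 : h.comp (Subfield.inclusion (le_sup_right : F ≤ E ⊔ F)) =
      h'.comp (Subfield.inclusion (le_sup_right : F ≤ E ⊔ F))) : h = h' := by
  have hle : E ⊔ F ≤ (h.eqLocusField h').map (E ⊔ F).subtype := sup_le
    (fun x hx => ⟨Subfield.inclusion le_sup_left ⟨x, hx⟩, RingHom.congr_fun h1 ⟨x, hx⟩, rfl⟩)
    (fun x hx => ⟨Subfield.inclusion le_sup_right ⟨x, hx⟩, RingHom.congr_fun h2 ⟨x, hx⟩, rfl⟩)
  ext x
  obtain ⟨y, hy, hyx⟩ := hle x.2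
  have : y = x := Subtype.ext hyx
  subst this
  exact hy

/-- amalgamation of ring homomorphisms over linearly disjoint
subfields, with `E/B` algebraic: homomorphisms `f : E → Ω`, `g : F → Ω`
agreeing on `B` have a unique common extension to the compositum `E·F`. -/
theorem amalgamation_of_ring_homs {K : Type*} [Field K] (B E F : Subfield K)
    (hBE : B ≤ E) (hBF : B ≤ F)
    (hdisj : LinearDisjointOver B E F)
    (halg : ∀ x ∈ E, IsAlgebraic B x)
    {Ω : Type*} [Field Ω] (f : E →+* Ω) (g : F →+* Ω)
    (hfg : ∀ (x : K) (hx : x ∈ B), f ⟨x, hBE hx⟩ = g ⟨x, hBF hx⟩) :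
    ∃! h : ↥(E ⊔ F) →+* Ω,
      h.comp (Subfield.inclusion (le_sup_left : E ≤ E ⊔ F)) = f ∧
      h.comp (Subfield.inclusion (le_sup_right : F ≤ E ⊔ F)) = g := by
  classical
  let E' : IntermediateField B K := E.toIntermediateField (fun x => hBE x.2)
  let F' : IntermediateField B K := F.toIntermediateField (fun x => hBF x.2)
  have hE : Submodule.span B (E : Set K) = Subalgebra.toSubmodule E'.toSubalgebra :=
    Submodule.span_eq (Subalgebra.toSubmodule E'.toSubalgebra)
  have hF : Submodule.span B (F : Set K) = Subalgebra.toSubmodule F'.toSubalgebra :=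
    Submodule.span_eq (Subalgebra.toSubmodule F'.toSubalgebra)
  have H : E'.toSubalgebra.LinearDisjoint F'.toSubalgebra := by
    unfold LinearDisjointOver at hdisj
    rw [hE, hF] at hdisj
    exact hdisj
  have : Algebra.IsAlgebraic B E' := ⟨fun x => by
    have := halg x.1 x.2
    exact (isAlgebraic_algebraMap_iff (A := K) (algebraMap E' K).injective).1 this⟩
  have hsup := IntermediateField.sup_toSubalgebra_of_isAlgebraic_left E' F'
  have hle : ∀ x ∈ E ⊔ F, x ∈ E'.toSubalgebra ⊔ F'.toSubalgebra := by
    have : E ⊔ F ≤ (E' ⊔ F').toSubfield := sup_le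
      (fun x hx => (le_sup_left : E' ≤ E' ⊔ F') hx) (fun x hx => (le_sup_right : F' ≤ E' ⊔ F') hx)
    intro x hx
    rw [← hsup]
    exact this hx
  letI : Algebra B Ω := (f.comp (Subfield.inclusion hBE)).toAlgebra
  let fa : E'.toSubalgebra →ₐ[B] Ω := { (f : E →+* Ω) with commutes' := fun _ => rfl }
  let ga : F'.toSubalgebra →ₐ[B] Ω :=
    { (g : F →+* Ω) with commutes' := fun r => (hfg r.1 r.2).symm }
  let l := Algebra.TensorProduct.lift fa ga (fun _ _ => Commute.all _ _)
  let i : ↥(E ⊔ F) →+* ↥(E'.toSubalgebra ⊔ F'.toSubalgebra) :=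
    (E ⊔ F).subtype.codRestrict (E'.toSubalgebra ⊔ F'.toSubalgebra) (fun x => hle x.1 x.2)
  let h0 : ↥(E ⊔ F) →+* Ω :=
    l.toRingHom.comp (H.mulMap.symm.toAlgHom.toRingHom.comp i)
  have e1 : h0.comp (Subfield.inclusion (le_sup_left : E ≤ E ⊔ F)) = f := by
    ext x
    let x' : E'.toSubalgebra := ⟨x.1, x.2⟩
    have : H.mulMap.symm (i (Subfield.inclusion le_sup_left x)) = x' ⊗ₜ[B] 1 := by
      rw [AlgEquiv.symm_apply_eq]
      apply Subtype.ext
      rw [Subalgebra.LinearDisjoint.val_mulMap_tmul]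
      exact (mul_one _).symm
    change l (H.mulMap.symm (i (Subfield.inclusion le_sup_left x))) = f x
    rw [this, Algebra.TensorProduct.lift_tmul, map_one, mul_one]
    rfl
  have e2 : h0.comp (Subfield.inclusion (le_sup_right : F ≤ E ⊔ F)) = g := by
    ext x
    let x' : F'.toSubalgebra := ⟨x.1, x.2⟩
    have : H.mulMap.symm (i (Subfield.inclusion le_sup_right x)) = 1 ⊗ₜ[B] x' := by
      rw [AlgEquiv.symm_apply_eq]
      apply Subtype.ext
      rw [Subalgebra.LinearDisjoint.val_mulMap_tmul]
      exact (one_mul _).symm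
    change l (H.mulMap.symm (i (Subfield.inclusion le_sup_right x))) = g x
    rw [this, Algebra.TensorProduct.lift_tmul, map_one, one_mul]
    rfl
  refine ⟨h0, ⟨e1, e2⟩, ?_⟩
  · rintro h ⟨h1, h2⟩
    exact ringHom_sup_ext _ _ (h1.trans e1.symm) (h2.trans e2.symm)
end

section
/- Let K be a field, B a subfield of K, and E₁, …, E_k subfields of K containing B, each algebraic over B, such that for each j < k, E_{j+1} is linearly disjoint over B from the compositum E₁⋯E_j. Let Ω be a field and σ : B → Ω a ring homomorphism. Then the restriction map τ ↦ (τ|_{E₁}, …, τ|_{E_k}) is a bijection from the set of ring homomorphisms τ : E₁⋯E_k → Ω with τ|_B = σ onto the product over j = 1, …, k of the sets of ring homomorphisms τ_j : E_j → Ω with τ_j|_B = σ. (The counting principle N(⋀_u φ_u) = ∏_u N(φ_u) underlying the Stochastic Independence Theorem.) -/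
open scoped TensorProduct in
theorem ce_key {K : Type*} [Field K] (B A F : Subfield K) (hBA : B ≤ A) (hBF : B ≤ F)
    (halg : ∀ x ∈ A, IsAlgebraic B x) (hd : LinearDisjointOver B A F)
    {Ω : Type*} [Field Ω] (σ : B →+* Ω) (f : A →+* Ω) (g : F →+* Ω)
    (hf : f.comp (Subfield.inclusion hBA) = σ) (hg : g.comp (Subfield.inclusion hBF) = σ) :
    ∃ h : ↥(A ⊔ F) →+* Ω,
      (∀ x (hx : x ∈ A), h ⟨x, le_sup_left (a := A) hx⟩ = f ⟨x, hx⟩) ∧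
      (∀ x (hx : x ∈ F), h ⟨x, le_sup_right (a := A) hx⟩ = g ⟨x, hx⟩) := by
  let _ : Algebra B Ω := σ.toAlgebra
  let A' : IntermediateField B K := A.toIntermediateField (fun x => hBA x.2)
  let F' : IntermediateField B K := F.toIntermediateField (fun x => hBF x.2)
  have hA : Submodule.span B (A : Set K) = Subalgebra.toSubmodule A'.toSubalgebra :=
    Submodule.span_eq (Subalgebra.toSubmodule A'.toSubalgebra)
  have hF : Submodule.span B (F : Set K) = Subalgebra.toSubmodule F'.toSubalgebra :=
    Submodule.span_eq (Subalgebra.toSubmodule F'.toSubalgebra)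
  have hd' : A'.toSubalgebra.LinearDisjoint F'.toSubalgebra := by
    unfold LinearDisjointOver at hd
    rw [hA, hF] at hd
    exact hd
  have : Algebra.IsAlgebraic B A' := ⟨fun x => by
    have := halg x.1 x.2
    exact (isAlgebraic_algebraMap_iff (algebraMap A' K).injective).1 this⟩
  let f' : A'.toSubalgebra →ₐ[B] Ω :=
    { (show A'.toSubalgebra →+* Ω from f) with
      commutes' := fun b => RingHom.congr_fun hf b }
  let g' : F'.toSubalgebra →ₐ[B] Ω :=
    { (show F'.toSubalgebra →+* Ω from g) with
      commutes' := fun b => RingHom.congr_fun hg b }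
  let m : A'.toSubalgebra ⊗[B] F'.toSubalgebra →ₐ[B] Ω :=
    Algebra.TensorProduct.lift f' g' (fun _ _ => Commute.all _ _)
  let h0 := m.comp hd'.mulMap.symm.toAlgHom
  have hle : ∀ x ∈ A ⊔ F, x ∈ A'.toSubalgebra ⊔ F'.toSubalgebra := by
    intro x hx
    rw [← IntermediateField.sup_toSubalgebra_of_isAlgebraic_left]
    have : A ⊔ F ≤ (A' ⊔ F').toSubfield :=
      sup_le (fun y hy => (le_sup_left : A' ≤ A' ⊔ F') hy)
        (fun y hy => (le_sup_right : F' ≤ A' ⊔ F') hy)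
    exact this hx
  let inc : ↥(A ⊔ F) →+* ↥(A'.toSubalgebra ⊔ F'.toSubalgebra) :=
    { toFun := fun x => ⟨x.1, hle x.1 x.2⟩
      map_one' := rfl
      map_mul' := fun _ _ => rfl
      map_zero' := rfl
      map_add' := fun _ _ => rfl }
  refine ⟨h0.toRingHom.comp inc, fun x hx => ?_, fun x hx => ?_⟩
  · have e : hd'.mulMap.symm (inc ⟨x, le_sup_left (a := A) hx⟩)
        = (⟨x, hx⟩ : A'.toSubalgebra) ⊗ₜ[B] (1 : F'.toSubalgebra) := by
      rw [AlgEquiv.symm_apply_eq]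
      apply Subtype.ext
      exact (mul_one x).symm
    change m (hd'.mulMap.symm (inc ⟨x, le_sup_left (a := A) hx⟩)) = _
    rw [e, Algebra.TensorProduct.lift_tmul, map_one, mul_one]
    rfl
  · have e : hd'.mulMap.symm (inc ⟨x, le_sup_right (a := A) hx⟩)
        = (1 : A'.toSubalgebra) ⊗ₜ[B] (⟨x, hx⟩ : F'.toSubalgebra) := by
      rw [AlgEquiv.symm_apply_eq]
      apply Subtype.ext
      exact (one_mul x).symm
    change m (hd'.mulMap.symm (inc ⟨x, le_sup_right (a := A) hx⟩)) = _
    rw [e, Algebra.TensorProduct.lift_tmul, map_one, one_mul]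
    rfl

/-- if `E₁, …, E_k` are algebraic extensions of `B` inside `K`,
each linearly disjoint over `B` from the compositum of the previous ones, then
restriction gives a bijection between ring homomorphisms `E₁⋯E_k → Ω` extending
`σ : B → Ω` and tuples of ring homomorphisms `E_j → Ω` extending `σ`. -/
theorem counting_extensions {K : Type*} [Field K] (B : Subfield K) (k : ℕ)
    (E : Fin k → Subfield K)
    (hBE : ∀ j, B ≤ E j)
    (halg : ∀ j, ∀ x ∈ E j, IsAlgebraic B x)
    (hdisj : ∀ j : Fin k,
      LinearDisjointOver B (E j) (B ⊔ ⨆ i : Fin k, ⨆ _ : (i : ℕ) < (j : ℕ), E i))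
    {Ω : Type*} [Field Ω] (σ : B →+* Ω) :
    Set.BijOn
      (fun τ : ↥(B ⊔ ⨆ j, E j) →+* Ω => fun j : Fin k =>
        τ.comp (Subfield.inclusion (le_trans (le_iSup E j)
          (le_sup_right : (⨆ j, E j) ≤ B ⊔ ⨆ j, E j))))
      {τ : ↥(B ⊔ ⨆ j, E j) →+* Ω |
        τ.comp (Subfield.inclusion (le_sup_left : B ≤ B ⊔ ⨆ j, E j)) = σ}
      {t : ∀ j : Fin k, ↥(E j) →+* Ω | ∀ j, (t j).comp (Subfield.inclusion (hBE j)) = σ} := by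
  refine ⟨?_, ?_, ?_⟩
  · intro τ hτ j
    have hτ' := RingHom.congr_fun hτ
    ext b
    exact hτ' b
  · intro τ₁ h₁ τ₂ h₂ h
    have key : B ⊔ ⨆ j, E j ≤
        (RingHom.eqLocusField τ₁ τ₂).map (Subfield.subtype (B ⊔ ⨆ j, E j)) := by
      refine sup_le (fun x hx => ?_) (iSup_le fun j x hx => ?_)
      · refine ⟨⟨x, le_sup_left (a := B) hx⟩, ?_, rfl⟩
        exact RingHom.congr_fun (h₁.trans h₂.symm) ⟨x, hx⟩
      · refine ⟨⟨x, le_sup_right (a := B) (le_iSup E j hx)⟩, ?_, rfl⟩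
        exact RingHom.congr_fun (congrFun h j) ⟨x, hx⟩
    ext x
    obtain ⟨y, hy, hyx⟩ := key x.2
    have : y = x := Subtype.ext hyx
    subst this
    exact hy
  · intro t ht
    have main : ∀ n : ℕ, n ≤ k →
        ∃ h : ↥(B ⊔ ⨆ i : Fin k, ⨆ _ : (i : ℕ) < n, E i) →+* Ω,
          h.comp (Subfield.inclusion le_sup_left) = σ ∧
          ∀ (i : Fin k) (_ : (i : ℕ) < n) (x : K) (hx : x ∈ E i)
            (hx' : x ∈ B ⊔ ⨆ i : Fin k, ⨆ _ : (i : ℕ) < n, E i),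
            h ⟨x, hx'⟩ = t i ⟨x, hx⟩ := by
      intro n
      induction n with
      | zero =>
        intro _
        have hle : B ⊔ ⨆ i : Fin k, ⨆ _ : (i : ℕ) < 0, E i ≤ B := by simp
        exact ⟨σ.comp (Subfield.inclusion hle), by ext b; rfl, fun i hi => absurd hi (Nat.not_lt_zero _)⟩
      | succ n ih =>
        intro hn
        obtain ⟨g, hgσ, hg⟩ := ih (by omega)
        obtain ⟨h, hA, hF⟩ := ce_key B (E ⟨n, hn⟩) _ (hBE _) le_sup_left (halg _)
          (hdisj ⟨n, hn⟩) σ (t ⟨n, hn⟩) g (ht _) hgσ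
        have hle : B ⊔ ⨆ i : Fin k, ⨆ _ : (i : ℕ) < n + 1, E i ≤
            E ⟨n, hn⟩ ⊔ (B ⊔ ⨆ i : Fin k, ⨆ _ : (i : ℕ) < n, E i) := by
          refine sup_le (le_sup_left.trans le_sup_right) (iSup_le fun i => iSup_le fun hi => ?_)
          rcases Nat.lt_succ_iff_lt_or_eq.1 hi with hi | hi
          · exact (le_iSup₂_of_le (f := fun (i : Fin k) (_ : (i : ℕ) < n) => E i) i hi le_rfl).trans (le_sup_right.trans le_sup_right)
          · obtain rfl : i = ⟨n, hn⟩ := Fin.ext hi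
            exact le_sup_left
        refine ⟨h.comp (Subfield.inclusion hle), ?_, ?_⟩
        · ext b
          rw [← ht ⟨n, hn⟩]
          exact hA b.1 (hBE _ b.2)
        · intro i hi x hx hx'
          rcases Nat.lt_succ_iff_lt_or_eq.1 hi with hi | hi
          · have hxF : x ∈ B ⊔ ⨆ i : Fin k, ⨆ _ : (i : ℕ) < n, E i :=
              le_sup_right (a := B) (le_iSup₂_of_le (f := fun (i : Fin k) (_ : (i : ℕ) < n) => E i)
                i hi le_rfl hx)
            exact (hF x hxF).trans (hg i hi x hx hxF)
          · obtain rfl : i = ⟨n, hn⟩ := Fin.ext hi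
            exact hA x hx
    obtain ⟨h, hσ, hh⟩ := main k le_rfl
    have hle : B ⊔ ⨆ j, E j ≤ B ⊔ ⨆ i : Fin k, ⨆ _ : (i : ℕ) < k, E i :=
      sup_le_sup le_rfl (iSup_mono fun i => le_iSup_of_le i.2 le_rfl)
    refine ⟨h.comp (Subfield.inclusion hle), by ext b; exact RingHom.congr_fun hσ b, ?_⟩
    funext j
    ext x
    exact hh j j.2 x.1 x.2 _
end

section
/- Let S be an I-system of difference fields on V over A, where I is a simplicial complex on V. Fix u ⊆ V and let J be any collection of subsets of V. Then the composite S(V)·∏_{v∈J∪I_u} S(v)^{alg} is linearly disjoint from S(u)^{alg} over S(u)·∏_{v∈J_u∪I_u} S(v)^{alg}. (Lemma 'linear disjointness in systems'.) -/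
/-- The relative algebraic closure `E^{alg}` of a subfield `E` inside `K`. -/
def algCl {K : Type*} [Field K] (E : Subfield K) : Subfield K :=
  Subfield.closure {x : K | IsAlgebraic E x}

/-- The inversive closure `E^{inv}`: the smallest subfield of `K` containing `E`
closed under `σ` and `σ⁻¹`. -/
def invCl {K : Type*} [Field K] (σ : K ≃+* K) (E : Subfield K) : Subfield K :=
  sInf {F : Subfield K | E ≤ F ∧ (∀ x ∈ F, σ x ∈ F) ∧ ∀ x ∈ F, σ.symm x ∈ F}

/-- `E` and `F` are independent over `C`: `((E·C)^{inv})^{alg}` and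
`((F·C)^{inv})^{alg}` are linearly disjoint over `(C^{inv})^{alg}`. -/
def IndependentOver {K : Type*} [Field K] (σ : K ≃+* K) (C E F : Subfield K) : Prop :=
  LinearDisjointOver (algCl (invCl σ C)) (algCl (invCl σ (E ⊔ C))) (algCl (invCl σ (F ⊔ C)))

/-- `F ≤ E` and `E/F` is a finite Galois extension (of subfields of `K`). -/
def IsFiniteGaloisExt {K : Type*} [Field K] (F E : Subfield K) : Prop :=
  ∃ h : F ≤ E,
    letI : Algebra F E := (Subfield.inclusion h).toAlgebra
    FiniteDimensional F E ∧ IsGalois F E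

/-- `I_u = {v ∩ u : v ∈ I}`. -/
def interFamily {V : Type*} [DecidableEq V] (I : Set (Finset V)) (u : Finset V) :
    Set (Finset V) :=
  {w | ∃ v ∈ I, w = v ∩ u}

/-- A system of difference fields on `V` over `A` inside `(K, σ)`. -/
structure DiffFieldSystem {K : Type*} [Field K] (σ : K ≃+* K)
    (V : Type*) [Fintype V] [DecidableEq V] (A : Subfield K) where
  /-- the underlying map from subsets of `V` to subfields of `K` -/
  S : Finset V → Subfield K
  mono : ∀ {u v : Finset V}, u ⊆ v → S u ≤ S v
  empty_eq : S ∅ = A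
  sigma_stable : ∀ u : Finset V, ∀ x ∈ S u, σ x ∈ S u
  perfect : ∀ u : Finset V, PerfectField (S u)
  /-- each `S u` has finite transcendence degree over `A` -/
  fin_trdeg : ∀ u : Finset V, ∃ t : Finset K,
    ∀ x ∈ S u, IsAlgebraic ↥(A ⊔ Subfield.closure (t : Set K)) x
  /-- each `S u` is the perfect closure of a difference subfield generated over
  `A` by a finite set (i.e. the smallest perfect `σ`-stable subfield of `K`
  containing `A` and that finite set) -/
  fin_gen : ∀ u : Finset V, ∃ t : Finset K,
    (A ≤ S u ∧ (t : Set K) ⊆ S u) ∧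
    ∀ F : Subfield K, A ≤ F → (t : Set K) ⊆ F → (∀ x ∈ F, σ x ∈ F) →
      PerfectField F → S u ≤ F
  /-- the family `(S {i})_{i ∈ V}` is independent over `A` -/
  indep : ∀ I₁ I₂ : Finset V, Disjoint I₁ I₂ →
    IndependentOver σ A (A ⊔ ⨆ i ∈ I₁, S {i}) (A ⊔ ⨆ i ∈ I₂, S {i})
  /-- for `|u| ≥ 2`, `S u` is a finite Galois extension of
  `S(u)⁻ = ∏_{v ∈ P(u)⁻} S v` -/
  galois : ∀ u : Finset V, 2 ≤ u.card →
    IsFiniteGaloisExt (⨆ v ∈ u.powerset.erase u, S v) (S u)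

namespace DiffFieldSystem

variable {K : Type*} [Field K] {σ : K ≃+* K}
variable {V : Type*} [Fintype V] [DecidableEq V] {A : Subfield K}

/-- `S(u)⁻ = ∏_{v ∈ P(u)⁻} S(v)`. -/
def Sminus (𝒮 : DiffFieldSystem σ V A) (u : Finset V) : Subfield K :=
  ⨆ v ∈ u.powerset.erase u, 𝒮.S v

/-- `𝒮` is an `I`-system: `S u = S(u)⁻` for `u ∉ I`. -/
def IsOn (𝒮 : DiffFieldSystem σ V A) (I : Set (Finset V)) : Prop :=
  ∀ u : Finset V, u ∉ I → 𝒮.S u = 𝒮.Sminus u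

/-- `𝒮` is regular: for every nonempty `u`, `S u` is linearly disjoint from
`∏_{v ∈ P(u)⁻} S(v)^{alg}` over `∏_{v ∈ P(u)⁻} S(v)`. -/
def Regular (𝒮 : DiffFieldSystem σ V A) : Prop :=
  ∀ u : Finset V, u ≠ ∅ →
    LinearDisjointOver (𝒮.Sminus u) (𝒮.S u) (⨆ v ∈ u.powerset.erase u, algCl (𝒮.S v))

end DiffFieldSystem

/-- `I` is a simplicial complex on `V`: downward closed with union all of `V`. -/
def IsSimplicialComplexOn (V : Type*) [DecidableEq V] (I : Set (Finset V)) : Prop :=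
  (∀ u ∈ I, ∀ v : Finset V, v ⊆ u → v ∈ I) ∧ ∀ i : V, ∃ u ∈ I, i ∈ u

open Filter TensorProduct

theorem germ_isAlgClosed {ι : Type*} (φ : Ultrafilter ι) (F : Type*) [Field F] [IsAlgClosed F] :
    IsAlgClosed (Germ (φ : Filter ι) F) := by
  apply IsAlgClosed.of_exists_root
  intro p hp hirr
  have hl : p ∈ Polynomial.lifts (Germ.coeRingHom (R := F) (φ : Filter ι)) := by
    rw [Polynomial.lifts_iff_coeff_lifts]
    intro n
    induction p.coeff n using Germ.inductionOn with
    | _ f => exact ⟨f, rfl⟩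
  obtain ⟨q, hq, hdeg, hqm⟩ := Polynomial.lifts_and_natDegree_eq_and_monic hl hp
  have hpos : 0 < p.natDegree := hirr.natDegree_pos
  have : ∀ t : ι, ∃ r : F, (q.map (Pi.evalRingHom (fun _ : ι => F) t)).eval r = 0 := by
    intro t
    obtain ⟨r, hr⟩ := IsAlgClosed.exists_root (q.map (Pi.evalRingHom (fun _ : ι => F) t)) (by
      rw [Polynomial.degree_eq_natDegree (hqm.map _).ne_zero, hqm.natDegree_map, hdeg]
      exact_mod_cast hpos.ne')
    exact ⟨r, hr⟩
  choose r hr using this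
  refine ⟨Germ.coeRingHom (φ : Filter ι) r, ?_⟩
  rw [← hq, Polynomial.eval_map_apply]
  have : q.eval r = 0 := by
    funext t
    have := hr t
    rw [show r t = Pi.evalRingHom (fun _ : ι => F) t r from rfl, Polynomial.eval_map_apply] at this
    exact this
  rw [this, map_zero]

/-- The map on ultrapowers induced by a ring homomorphism. -/
noncomputable def germMap {ι : Type*} (φ : Ultrafilter ι) {F K : Type*} [Field F] [Field K]
    (f : F →+* K) : Germ (φ : Filter ι) F →+* Germ (φ : Filter ι) K where
  toFun := Germ.map f
  map_one' := by
    change Germ.map f ((fun _ => (1 : F) : ι → F) : Germ (φ : Filter ι) F) = ((fun _ => (1:K) : ι → K) : Germ (φ : Filter ι) K)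
    rw [Germ.map_coe]; congr 1; funext; simp
  map_zero' := by
    change Germ.map f ((fun _ => (0 : F) : ι → F) : Germ (φ : Filter ι) F) = ((fun _ => (0:K) : ι → K) : Germ (φ : Filter ι) K)
    rw [Germ.map_coe]; congr 1; funext; simp
  map_mul' := by
    intro x y
    induction x, y using Germ.inductionOn₂ with
    | _ x y => 
      rw [← Germ.coe_mul]
      simp only [Germ.map_coe]
      rw [← Germ.coe_mul]; congr 1; funext; simp
  map_add' := by
    intro x y
    induction x, y using Germ.inductionOn₂ with
    | _ x y => 
      rw [← Germ.coe_add]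
      simp only [Germ.map_coe]
      rw [← Germ.coe_add]; congr 1; funext; simp

/-- The ultrapower of a subfield as a subfield of the ultrapower. -/
noncomputable def germSub {ι : Type*} (φ : Ultrafilter ι) {K : Type*} [Field K] (D : Subfield K) :
    Subfield (Germ (φ : Filter ι) K) := (germMap φ D.subtype).fieldRange

theorem mem_germSub {ι : Type*} {φ : Ultrafilter ι} {K : Type*} [Field K] {D : Subfield K}
    {x : Germ (φ : Filter ι) K} : x ∈ germSub φ D ↔ ∃ f : ι → K, (∀ t, f t ∈ D) ∧ x = (f : Germ (φ : Filter ι) K) := by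
  constructor
  · rintro ⟨y, rfl⟩
    induction y using Germ.inductionOn with
    | _ f => exact ⟨fun t => (f t : K), fun t => (f t).2, rfl⟩
  · rintro ⟨f, hf, rfl⟩
    exact ⟨((fun t => ⟨f t, hf t⟩ : ι → D) : Germ (φ : Filter ι) D), rfl⟩

theorem germSub_mono {ι : Type*} (φ : Ultrafilter ι) {K : Type*} [Field K] {D D' : Subfield K}
    (h : D ≤ D') : germSub φ D ≤ germSub φ D' := by
  intro x hx
  obtain ⟨f, hf, rfl⟩ := mem_germSub.1 hx
  exact mem_germSub.2 ⟨f, fun t => h (hf t), rfl⟩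

theorem mem_germSub_of_isAlgebraic {ι : Type*} (φ : Ultrafilter ι) {K : Type*} [Field K]
    (D : Subfield K) [IsAlgClosed D] (x : Germ (φ : Filter ι) K)
    (hx : IsAlgebraic (germSub φ D) x) : x ∈ germSub φ D := by
  have : IsAlgClosed (Germ (φ : Filter ι) D) := germ_isAlgClosed φ D
  have : IsAlgClosed (germSub φ D) := by
    refine IsAlgClosed.of_ringEquiv _ _ (RingEquiv.ofBijective (germMap φ D.subtype).rangeRestrictField ⟨?_, ?_⟩)
    · exact RingHom.injective _
    · rintro ⟨_, ⟨y, rfl⟩⟩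
      exact ⟨y, rfl⟩
  have hd := IsAlgClosed.degree_eq_one_of_irreducible (germSub φ D) (minpoly.irreducible hx.isIntegral)
  obtain ⟨y, hy⟩ := minpoly.mem_range_of_degree_eq_one (germSub φ D) x hd
  rw [← hy]
  exact y.2

theorem exists_point (k A : Type*) [Field k] [IsAlgClosed k] [CommRing A] [Nontrivial A] [Algebra k A]
    [Algebra.FiniteType k A] : Nonempty (A →ₐ[k] k) := by
  obtain ⟨m, hm⟩ := Ideal.exists_maximal A
  let _ : Field (A ⧸ m) := Ideal.Quotient.field m
  have : Module.Finite k (A ⧸ m) := finite_of_finite_type_of_isJacobsonRing k (A ⧸ m)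
  have hb := IsAlgClosed.algebraMap_bijective_of_isIntegral (k := k) (K := A ⧸ m)
  exact ⟨((AlgEquiv.ofBijective (Algebra.ofId k (A ⧸ m)) hb).symm : (A ⧸ m) →ₐ[k] k).comp (Ideal.Quotient.mkₐ k m)⟩

theorem exists_coheir (k Q : Type*) [Field k] [IsAlgClosed k] [CommRing Q] [Nontrivial Q] [Algebra k Q] :
    ∃ (φ : Ultrafilter (Finset Q)) (g : Q →+* Germ (φ : Filter (Finset Q)) k),
      ∀ c : k, g (algebraMap k Q c) = ((fun _ => c : Finset Q → k) : Germ (φ : Filter (Finset Q)) k) := by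
  classical
  have hp : ∀ s : Finset Q, Nonempty (Algebra.adjoin k (s : Set Q) →ₐ[k] k) := by
    intro s
    have : Algebra.FiniteType k (Algebra.adjoin k (s : Set Q)) :=
      (Subalgebra.fg_iff_finiteType _).1 (Subalgebra.fg_adjoin_finset s)
    exact exists_point k _
  let p : ∀ s : Finset Q, (Algebra.adjoin k (s : Set Q) →ₐ[k] k) := fun s => (hp s).some
  let e : Q → Finset Q → k := fun x s => if h : x ∈ Algebra.adjoin k (s : Set Q) then p s ⟨x, h⟩ else 0
  have he : ∀ (x : Q) (s : Finset Q) (h : x ∈ Algebra.adjoin k (s : Set Q)), e x s = p s ⟨x, h⟩ := fun x s h => dif_pos h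
  have hev : ∀ x : Q, ∀ᶠ s : Finset Q in (atTop : Filter (Finset Q)), x ∈ Algebra.adjoin k (s : Set Q) := by
    intro x
    filter_upwards [eventually_ge_atTop {x}] with s hs
    exact Algebra.subset_adjoin (hs (Finset.mem_singleton_self x))
  let φ : Ultrafilter (Finset Q) := Ultrafilter.of atTop
  have hev' : ∀ x : Q, ∀ᶠ s : Finset Q in (φ : Filter (Finset Q)), x ∈ Algebra.adjoin k (s : Set Q) :=
    fun x => Ultrafilter.of_le atTop (hev x)
  have hc : ∀ c : k, ((e (algebraMap k Q c)) : Germ (φ : Filter (Finset Q)) k) = ((fun _ => c : Finset Q → k) : Germ (φ : Filter (Finset Q)) k) := by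
    intro c
    apply Germ.coe_eq.2
    refine Eventually.of_forall fun s => ?_
    change e (algebraMap k Q c) s = c
    rw [he _ _ (Subalgebra.algebraMap_mem _ c)]
    exact (p s).commutes c
  refine ⟨φ, { toFun := fun x => (e x : Germ (φ : Filter (Finset Q)) k), map_one' := ?_, map_mul' := ?_, map_zero' := ?_, map_add' := ?_ }, hc⟩
  · rw [← map_one (algebraMap k Q), hc]; rfl
  · intro x y
    rw [← Germ.coe_mul]
    apply Germ.coe_eq.2
    filter_upwards [hev' x, hev' y] with s hx hy
    simp only [Pi.mul_apply]
    rw [he _ _ hx, he _ _ hy, he _ _ (mul_mem hx hy), ← map_mul]; rfl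
  · rw [← map_zero (algebraMap k Q), hc]; rfl
  · intro x y
    rw [← Germ.coe_add]
    apply Germ.coe_eq.2
    filter_upwards [hev' x, hev' y] with s hx hy
    simp only [Pi.add_apply]
    rw [he _ _ hx, he _ _ hy, he _ _ (add_mem hx hy), ← map_add]; rfl

theorem mem_algCl {K : Type*} [Field K] {E : Subfield K} {x : K} :
    x ∈ algCl E ↔ IsAlgebraic E x := by
  constructor
  · intro hx
    have : algCl E ≤ (algebraicClosure E K).toSubfield := by
      apply Subfield.closure_le.2
      intro y hy
      exact (mem_algebraicClosure_iff' (F := E) (E := K)).2 (IsAlgebraic.isIntegral hy)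
    exact ((mem_algebraicClosure_iff' (F := E) (E := K)).1 (this hx)).isAlgebraic
  · intro hx
    exact Subfield.subset_closure hx

theorem le_algCl {K : Type*} [Field K] (E : Subfield K) : E ≤ algCl E := by
  intro x hx
  exact mem_algCl.2 (isAlgebraic_algebraMap (⟨x, hx⟩ : E))

theorem isAlgebraic_mono {K : Type*} [Field K] {E F : Subfield K} (h : E ≤ F) {x : K}
    (hx : IsAlgebraic E x) : IsAlgebraic F x := by
  obtain ⟨p, hp, hpx⟩ := hx
  refine ⟨p.map (Subfield.inclusion h), (Polynomial.map_ne_zero_iff (Subfield.inclusion h).injective).2 hp, ?_⟩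
  rw [Polynomial.aeval_def, Polynomial.eval₂_map]
  exact hpx

theorem algCl_mono {K : Type*} [Field K] {E F : Subfield K} (h : E ≤ F) : algCl E ≤ algCl F := by
  intro x hx
  exact mem_algCl.2 (isAlgebraic_mono h (mem_algCl.1 hx))

theorem algCl_idem {K : Type*} [Field K] (E : Subfield K) : algCl (algCl E) = algCl E := by
  apply le_antisymm _ (le_algCl _)
  intro x hx
  have hx := mem_algCl.1 hx
  let _ : Algebra E (algCl E) := (Subfield.inclusion (le_algCl E)).toAlgebra
  have : IsScalarTower E (algCl E) K := IsScalarTower.of_algebraMap_eq fun _ => rfl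
  have : Algebra.IsAlgebraic E (algCl E) := ⟨fun y => by
    have := mem_algCl.1 y.2
    exact (isAlgebraic_algebraMap_iff (algebraMap (algCl E) K).injective).1 this⟩
  exact mem_algCl.2 (hx.restrictScalars E)

theorem algCl_le {K : Type*} [Field K] {E F : Subfield K} (h : E ≤ algCl F) : algCl E ≤ algCl F := by
  rw [← algCl_idem F]
  exact algCl_mono h

theorem isAlgClosed_algCl {K : Type*} [Field K] [IsAlgClosed K] (E : Subfield K) :
    IsAlgClosed (algCl E) := by
  apply IsAlgClosed.of_exists_root
  intro p hp hirr
  obtain ⟨x, hx⟩ := IsAlgClosed.exists_aeval_eq_zero K p (by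
    exact (Polynomial.degree_pos_of_irreducible hirr).ne')
  have : x ∈ algCl (algCl E) := mem_algCl.2 ⟨p, hirr.ne_zero, hx⟩
  rw [algCl_idem] at this
  refine ⟨⟨x, this⟩, ?_⟩
  apply (algCl E).subtype.injective
  rw [map_zero, ← hx, Polynomial.aeval_def, ← Polynomial.eval₂_at_apply]
  rfl

theorem span_subfield {K : Type*} [Field K] {C E : Subfield K} (h : C ≤ E) :
    Submodule.span C (E : Set K) = (Subfield.extendScalars h).toSubalgebra.toSubmodule := by
  apply le_antisymm
  · exact Submodule.span_le.2 fun x hx => hx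
  · exact fun x hx => Submodule.subset_span hx

theorem LinearDisjointOver.mono {K : Type*} [Field K] {C E F E' F' : Subfield K}
    (h : LinearDisjointOver C E F) (hE : E' ≤ E) (hF : F' ≤ F) : LinearDisjointOver C E' F' := by
  unfold LinearDisjointOver at *
  exact h.of_le_of_flat_right (Submodule.span_mono hE) (Submodule.span_mono hF)

theorem algebraic_over_range {K : Type*} [Field K] {P Q : Subfield K} (M : Subring K)
    (hP : ∀ x ∈ P, x ∈ M) (hQ : ∀ x ∈ Q, x ∈ M) {x : K} (hx : x ∈ algCl (P ⊔ Q)) :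
    IsAlgebraic M x := by
  let T : Subfield K := 
    { (Subalgebra.algebraicClosure M K).toSubring with
      inv_mem' := fun x hx => by
        have hx : IsAlgebraic M x := hx
        exact IsAlgebraic.inv hx }
  have hT : ∀ y, y ∈ T ↔ IsAlgebraic M y := fun y => Iff.rfl
  have hPQ : P ⊔ Q ≤ T := by
    apply sup_le
    · intro y hy
      exact isAlgebraic_algebraMap (⟨y, hP y hy⟩ : M)
    · intro y hy
      exact isAlgebraic_algebraMap (⟨y, hQ y hy⟩ : M)
  have hx := mem_algCl.1 (algCl_mono hPQ hx)
  let _ : Algebra M T := (Subring.inclusion (show M ≤ T.toSubring from fun y hy => isAlgebraic_algebraMap (⟨y, hy⟩ : M))).toAlgebra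
  have : IsScalarTower M T K := IsScalarTower.of_algebraMap_eq fun _ => rfl
  have : Algebra.IsAlgebraic M T := ⟨fun y =>
    (isAlgebraic_algebraMap_iff (algebraMap T K).injective).1 ((hT y).1 y.2)⟩
  exact hx.restrictScalars M

theorem lift_hom {T W L : Type*} [CommRing T] [Field W] [Field L] [IsAlgClosed L]
    (m : T →+* W) (hm : Function.Injective m) (j : T →+* L) (hj : Function.Injective j)
    (halg : ∀ x : W, ∃ p : Polynomial T, p ≠ 0 ∧ p.eval₂ m x = 0) :
    ∃ Φ : W →+* L, ∀ t, Φ (m t) = j t := by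
  have hTd : IsDomain T := Function.Injective.isDomain m hm
  let _ : Algebra T W := m.toAlgebra
  let _ : Algebra T L := j.toAlgebra
  have : FaithfulSMul T W := (faithfulSMul_iff_algebraMap_injective T W).2 hm
  have : FaithfulSMul T L := (faithfulSMul_iff_algebraMap_injective T L).2 hj
  have : Algebra.IsAlgebraic T W := ⟨halg⟩
  let Φ : W →ₐ[T] L := IsAlgClosed.lift
  exact ⟨Φ.toRingHom, fun t => Φ.commutes t⟩

set_option maxHeartbeats 2000000 in
theorem exists_phi.{u} {K : Type u} [Field K] [IsAlgClosed K] (k P Q : Subfield K) (hkP : k ≤ P) (hkQ : k ≤ Q)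
    [IsAlgClosed k] (h : LinearDisjointOver k P Q)
    (W : Subfield K) (hW : W = algCl (P ⊔ Q)) :
    ∃ (ι : Type u) (φ : Ultrafilter ι) (Φ : W →+* Germ (φ : Filter ι) K),
      (∀ x : W, (x : K) ∈ P → Φ x = ((fun _ => (x : K) : ι → K) : Germ (φ : Filter ι) K)) ∧
      (∀ x : W, (x : K) ∈ Q → Φ x ∈ germSub φ k) := by
  classical
  let P' := (Subfield.extendScalars hkP).toSubalgebra
  let Q' := (Subfield.extendScalars hkQ).toSubalgebra
  have hdis : P'.LinearDisjoint Q' := by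
    unfold LinearDisjointOver at h
    rw [span_subfield hkP, span_subfield hkQ] at h
    exact h
  have hinj : Function.Injective (P'.mulMap Q') := Subalgebra.linearDisjoint_iff_injective.1 hdis
  obtain ⟨φ, g, hg⟩ := exists_coheir k Q'
  have hginj : ∀ q : Q', g q = 0 → q = 0 := by
    intro q hq
    by_contra hne
    have hne' : (q : K) ≠ 0 := fun h => hne (Subtype.ext h)
    let r : Q' := ⟨(q : K)⁻¹, Q.inv_mem q.2⟩
    have hqr : q * r = 1 := Subtype.ext (mul_inv_cancel₀ hne')
    have := congrArg g hqr
    rw [map_mul, hq, zero_mul, map_one] at this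
    exact zero_ne_one this
  let L := Germ (φ : Filter (Finset Q')) K
  let cst : K →+* L := (Germ.coeRingHom (φ : Filter (Finset Q'))).comp (Pi.constRingHom (Finset Q') K)
  let _ : Algebra k L := (cst.comp k.subtype).toAlgebra
  let jP : P' →ₐ[k] L := { cst.comp P'.val.toRingHom with commutes' := fun c => rfl }
  let jQ : Q' →ₐ[k] L := { (germMap φ k.subtype).comp g with 
    commutes' := fun c => by
      change germMap φ k.subtype (g (algebraMap k Q' c)) = _
      rw [hg]; rfl }
  let T := P' ⊗[k] Q'
  let j : T →ₐ[k] L := Algebra.TensorProduct.productMap jP jQ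
  have hjinj : Function.Injective j := by
    rw [injective_iff_map_eq_zero]
    intro t ht
    let b := Module.Basis.ofVectorSpace k P'
    obtain ⟨c, rfl⟩ := TensorProduct.eq_repr_basis_left b t
    have hf : ∀ q : Q', ∃ f : Finset Q' → k, g q = (f : Germ (φ : Filter (Finset Q')) k) := by
      intro q
      induction g q using Germ.inductionOn with
      | _ f => exact ⟨f, rfl⟩
    choose f hf using hf
    have h1 : j (c.sum fun i n => b i ⊗ₜ n) = 
        ((fun s => ∑ i ∈ c.support, (b i : K) * (f (c i) s : K) : Finset Q' → K) : L) := by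
      rw [Finsupp.sum, map_sum]
      have : (fun s => ∑ i ∈ c.support, (b i : K) * (f (c i) s : K) : Finset Q' → K) = ∑ i ∈ c.support, (fun s => (b i : K) * (f (c i) s : K)) := by
        funext s; simp
      rw [this]
      change _ = Germ.coeRingHom (φ : Filter (Finset Q')) _
      rw [map_sum]
      refine Finset.sum_congr rfl fun i _ => ?_
      rw [Algebra.TensorProduct.productMap_apply_tmul]
      change cst (b i) * germMap φ k.subtype (g (c i)) = _
      rw [hf]
      rfl
    rw [h1] at ht
    have h2 : ∀ᶠ s in (φ : Filter (Finset Q')), ∑ i ∈ c.support, (b i : K) * (f (c i) s : K) = 0 :=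
      Germ.coe_eq.1 ht
    have h3 : c = 0 := by
      ext i
      by_contra hi
      have hi' : c i ≠ 0 := fun h => hi (by rw [h]; rfl)
      have : g (c i) = 0 := by
        rw [hf]
        apply Germ.coe_eq.2
        filter_upwards [h2] with s hs
        have h4 : ∑ i ∈ c.support, (f (c i) s) • b i = 0 := by
          apply Subtype.ext
          refine Eq.trans ?_ hs
          simp only [AddSubmonoidClass.coe_finsetSum, Subalgebra.coe_smul]
          refine Finset.sum_congr rfl fun i _ => ?_
          rw [mul_comm]; rfl
        exact linearIndependent_iff'.1 b.linearIndependent _ _ h4 i (Finsupp.mem_support_iff.2 hi')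
      exact hi' (hginj _ this)
    rw [h3]; simp
  -- algebra structures
  let R : Subring K := (P'.mulMap Q').range.toSubring
  have hrange : ∀ t : R, (t : K) ∈ W := by
    rintro ⟨_, t, rfl⟩
    change P'.mulMap Q' t ∈ W
    induction t using TensorProduct.induction_on with
    | zero => rw [map_zero]; exact zero_mem _
    | add x y hx hy => rw [map_add]; exact add_mem hx hy
    | tmul x y =>
      rw [Subalgebra.mulMap_tmul, hW]
      exact mul_mem (le_algCl _ ((le_sup_left : P ≤ P ⊔ Q) x.2)) (le_algCl _ ((le_sup_right : Q ≤ P ⊔ Q) y.2))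
  let m : R →+* W := RingHom.codRestrict R.subtype W hrange
  have hminj : Function.Injective m := fun x y hxy => Subtype.ext (congrArg W.subtype hxy)
  have hLc : IsAlgClosed L := germ_isAlgClosed φ K
  have hl : ∀ (y : K) (hy : y ∈ P'), P'.mulMap Q' ((⟨y, hy⟩ : P') ⊗ₜ 1) = y := by
    intro y hy
    rw [Subalgebra.mulMap_tmul]; simp
  have hr : ∀ (y : K) (hy : y ∈ Q'), P'.mulMap Q' (1 ⊗ₜ (⟨y, hy⟩ : Q')) = y := by
    intro y hy
    rw [Subalgebra.mulMap_tmul]; simp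
  have halg : ∀ x : W, ∃ p : Polynomial R, p ≠ 0 ∧ p.eval₂ m x = 0 := by
    intro x
    obtain ⟨p, hp0, hpx⟩ := algebraic_over_range (P := P) (Q := Q) R
      (fun y hy => ⟨(⟨y, hy⟩ : P') ⊗ₜ 1, hl y hy⟩)
      (fun y hy => ⟨1 ⊗ₜ (⟨y, hy⟩ : Q'), hr y hy⟩) (hW.le x.2)
    refine ⟨p, hp0, ?_⟩
    apply W.subtype.injective
    rw [map_zero, ← hpx, Polynomial.aeval_def, Polynomial.hom_eval₂]
    rfl
  let e : T ≃ₐ[k] (P'.mulMap Q').range := AlgEquiv.ofInjective _ hinj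
  let j' : R →+* L := (j.comp e.symm.toAlgHom).toRingHom
  have hj' : Function.Injective j' := hjinj.comp e.symm.injective
  obtain ⟨Φ, hΦ'⟩ := lift_hom m hminj j' hj' halg
  have hΦ : ∀ (x : W) (t : T), P'.mulMap Q' t = (x : K) → Φ x = j t := by
    intro x t hxt
    have h1 : x = m (e t) := Subtype.ext hxt.symm
    rw [h1, hΦ']
    change j (e.symm (e t)) = _
    rw [AlgEquiv.symm_apply_apply]
  refine ⟨Finset Q', φ, Φ, ?_, ?_⟩
  · intro x hx
    rw [hΦ x _ (hl _ hx), Algebra.TensorProduct.productMap_apply_tmul, map_one, mul_one]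
    rfl
  · intro x hx
    rw [hΦ x _ (hr _ hx), Algebra.TensorProduct.productMap_apply_tmul, map_one, one_mul]
    exact ⟨g _, rfl⟩

theorem core_disjoint {K : Type*} [Field K] [IsAlgClosed K] (k P Q : Subfield K)
    (hkP : k ≤ P) (hkQ : k ≤ Q) [IsAlgClosed k] (h : LinearDisjointOver k P Q)
    {J : Type*} (D : J → Subfield K) (hkD : ∀ j, k ≤ D j) (hDP : ∀ j, D j ≤ P)
    (hD : ∀ j, IsAlgClosed (D j)) :
    LinearDisjointOver (⨆ j, D j) (⨆ j, algCl (D j ⊔ Q)) P := by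
  classical
  obtain ⟨W, hW⟩ : ∃ W : Subfield K, W = algCl (P ⊔ Q) := ⟨_, rfl⟩
  obtain ⟨ι, φ, Φ, hΦP, hΦQ⟩ := exists_phi k P Q hkP hkQ h W hW
  set C := ⨆ j, D j with hC
  set E := ⨆ j, algCl (D j ⊔ Q) with hE
  have hCP : C ≤ P := iSup_le hDP
  have hPW : P ≤ W := hW ▸ le_sup_left.trans (le_algCl _)
  have hCE : C ≤ E := iSup_mono fun j => le_sup_left.trans (le_algCl _)
  have hEW : E ≤ W := hW ▸ iSup_le fun j => algCl_mono (sup_le_sup_right (hDP j) Q)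
  -- the image of `E` lies in the ultrapower of `C`
  have key1 : ∀ j, ∀ x : W, (x : K) ∈ algCl (D j ⊔ Q) → Φ x ∈ germSub φ (D j) := by
    intro j x hx
    have hDQW : D j ⊔ Q ≤ W := hW ▸ (sup_le_sup_right (hDP j) Q).trans (le_algCl _)
    have hsub : D j ⊔ Q ≤ ((germSub φ (D j)).comap Φ).map W.subtype := by
      apply sup_le
      · intro y hy
        refine ⟨⟨y, hPW (hDP j hy)⟩, ?_, rfl⟩
        change Φ _ ∈ germSub φ (D j)
        rw [hΦP ⟨y, hPW (hDP j hy)⟩ (hDP j hy)]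
        exact mem_germSub.2 ⟨_, fun _ => hy, rfl⟩
      · intro y hy
        refine ⟨⟨y, hDQW ((le_sup_right : Q ≤ D j ⊔ Q) hy)⟩, ?_, rfl⟩
        exact germSub_mono φ (hkD j) (hΦQ _ hy)
    have := hD j
    apply mem_germSub_of_isAlgebraic
    obtain ⟨p, hp, hpx⟩ := mem_algCl.1 hx
    have hmem : ∀ y : ↥(D j ⊔ Q), Φ ⟨y, hDQW y.2⟩ ∈ germSub φ (D j) := by
      intro y
      obtain ⟨z, hz, hzy⟩ := hsub y.2
      have : z = ⟨y, hDQW y.2⟩ := Subtype.ext hzy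
      rw [← this]; exact hz
    let r : ↥(D j ⊔ Q) →+* germSub φ (D j) :=
      (Φ.comp (Subfield.inclusion hDQW)).codRestrict (germSub φ (D j)) hmem
    refine ⟨p.map r, (Polynomial.map_ne_zero_iff r.injective).2 hp, ?_⟩
    have h0 : p.eval₂ (Subfield.inclusion hDQW) x = 0 := by
      apply W.subtype.injective
      rw [Polynomial.hom_eval₂, map_zero]
      exact hpx
    have h1 := congrArg Φ h0
    rw [Polynomial.hom_eval₂, map_zero] at h1
    rw [Polynomial.aeval_def, Polynomial.eval₂_map]
    exact h1
  have key : ∀ x : W, (x : K) ∈ E → Φ x ∈ germSub φ C := by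
    intro x hx
    have hsub : E ≤ ((germSub φ C).comap Φ).map W.subtype := by
      apply iSup_le
      intro j y hy
      have hyW : y ∈ W := hEW ((le_iSup (fun j => algCl (D j ⊔ Q)) j) hy)
      exact ⟨⟨y, hyW⟩, germSub_mono φ (le_iSup D j) (key1 j ⟨y, hyW⟩ hy), rfl⟩
    obtain ⟨z, hz, hzy⟩ := hsub hx
    have : z = x := Subtype.ext hzy
    rw [← this]; exact hz
  unfold LinearDisjointOver
  rw [span_subfield hCE, span_subfield hCP]
  set M := (Subfield.extendScalars hCE).toSubalgebra.toSubmodule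
  set N := (Subfield.extendScalars hCP).toSubalgebra.toSubmodule
  let b := Module.Basis.ofVectorSpace C N
  apply Submodule.LinearDisjoint.of_basis_right _ _ b
  rw [LinearMap.ker_eq_bot']
  intro e he
  have he' : ∑ i ∈ e.support, (e i : K) * (b i : K) = 0 := by
    rw [← he, Submodule.mulRightMap_apply]; rfl
  have hEe : ∀ i, (e i : K) ∈ E := fun i => (e i).2
  have hPb : ∀ i, (b i : K) ∈ P := fun i => (b i).2
  have hf : ∀ i, ∃ f : ι → K, (∀ t, f t ∈ C) ∧ Φ ⟨e i, hEW (hEe i)⟩ = (f : Germ (φ : Filter ι) K) :=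
    fun i => mem_germSub.1 (key ⟨e i, hEW (hEe i)⟩ (hEe i))
  choose f hfC hf using hf
  have h1 : ((fun s => ∑ i ∈ e.support, f i s * (b i : K) : ι → K) : Germ (φ : Filter ι) K) = 0 := by
    have h2 : ∑ i ∈ e.support, (⟨e i, hEW (hEe i)⟩ : W) * ⟨b i, hPW (hPb i)⟩ = 0 := by
      apply W.subtype.injective
      rw [map_sum, map_zero]
      exact he'
    have h3 := congrArg Φ h2
    rw [map_sum, map_zero] at h3
    rw [← h3]
    have : (fun s => ∑ i ∈ e.support, f i s * (b i : K) : ι → K)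
        = ∑ i ∈ e.support, (fun s => f i s * (b i : K)) := by
      funext s; simp
    rw [this]
    change Germ.coeRingHom (φ : Filter ι) _ = _
    rw [map_sum]
    refine Finset.sum_congr rfl fun i _ => ?_
    rw [map_mul, hf, hΦP ⟨b i, hPW (hPb i)⟩ (hPb i)]
    rfl
  have h2 : ∀ᶠ s in (φ : Filter ι), ∑ i ∈ e.support, f i s * (b i : K) = 0 := Germ.coe_eq.1 h1
  by_contra hne
  obtain ⟨i, hi⟩ := Finsupp.support_nonempty_iff.2 hne
  have h3 : Φ ⟨e i, hEW (hEe i)⟩ = 0 := by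
    rw [hf]
    apply Germ.coe_eq.2
    filter_upwards [h2] with s hs
    have h4 : ∑ i ∈ e.support, (⟨f i s, hfC i s⟩ : C) • b i = 0 := by
      apply N.subtype_injective
      rw [map_sum, map_zero]
      exact hs
    exact congrArg Subtype.val (linearIndependent_iff'.1 b.linearIndependent _ _ h4 i hi)
  have h4 := (map_eq_zero Φ).1 h3
  exact Finsupp.mem_support_iff.1 hi (Subtype.ext (congrArg W.subtype h4))

theorem invCl_eq {K : Type*} [Field K] (σ : K ≃+* K) (A : Subfield K)
    (hA : A.map (σ : K →+* K) = A) : invCl σ A = A := by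
  apply le_antisymm
  · apply sInf_le
    refine ⟨le_rfl, ?_, ?_⟩
    · intro x hx
      rw [← hA]
      exact ⟨x, hx, rfl⟩
    · intro x hx
      rw [← hA] at hx
      obtain ⟨y, hy, rfl⟩ := hx
      change σ.symm (σ y) ∈ A
      rwa [RingEquiv.symm_apply_apply]
  · exact le_sInf fun _ hF => hF.1

theorem le_invCl {K : Type*} [Field K] (σ : K ≃+* K) (A : Subfield K) : A ≤ invCl σ A :=
  le_sInf fun _ hF => hF.1

namespace DiffFieldSystem

variable {K : Type*} [Field K] {σ : K ≃+* K}
variable {V : Type*} [Fintype V] [DecidableEq V] {A : Subfield K}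

theorem Sminus_le (𝒮 : DiffFieldSystem σ V A) {u : Finset V} {X : Subfield K}
    (h : ∀ v, v ⊂ u → 𝒮.S v ≤ X) : 𝒮.Sminus u ≤ X := by
  refine iSup₂_le fun v hv => h v ?_
  rw [Finset.mem_erase, Finset.mem_powerset] at hv
  exact lt_of_le_of_ne hv.2 hv.1

theorem S_le_algCl (𝒮 : DiffFieldSystem σ V A) (u : Finset V) :
    𝒮.S u ≤ algCl (A ⊔ ⨆ i ∈ u, 𝒮.S {i}) := by
  induction u using Finset.strongInduction with
  | H u ih =>
    by_cases hc : 2 ≤ u.card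
    · obtain ⟨hle, hfin, -⟩ := 𝒮.galois u hc
      have h1 : 𝒮.Sminus u ≤ algCl (A ⊔ ⨆ i ∈ u, 𝒮.S {i}) := by
        apply 𝒮.Sminus_le
        intro v hv
        refine (ih v hv).trans (algCl_mono (sup_le_sup_left ?_ A))
        exact biSup_mono fun i hi => hv.1 hi
      have h2 : 𝒮.S u ≤ algCl (𝒮.Sminus u) := by
        intro x hx
        let _ : Algebra ↥(⨆ v ∈ u.powerset.erase u, 𝒮.S v) (𝒮.S u) := (Subfield.inclusion hle).toAlgebra
        have : FiniteDimensional ↥(⨆ v ∈ u.powerset.erase u, 𝒮.S v) (𝒮.S u) := hfin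
        have h3 : IsAlgebraic ↥(⨆ v ∈ u.powerset.erase u, 𝒮.S v) (⟨x, hx⟩ : 𝒮.S u) :=
          Algebra.IsAlgebraic.isAlgebraic _
        obtain ⟨p, hp, hpx⟩ := h3
        refine mem_algCl.2 ⟨p, hp, ?_⟩
        have := congrArg (𝒮.S u).subtype hpx
        rw [Polynomial.aeval_def, Polynomial.hom_eval₂, map_zero] at this
        exact this
      exact h2.trans (algCl_le h1)
    · refine le_trans ?_ (le_algCl _)
      rcases Nat.lt_or_ge 0 u.card with h0 | h0
      · obtain ⟨i, rfl⟩ := Finset.card_eq_one.1 (show u.card = 1 by omega)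
        exact le_trans (le_iSup₂_of_le i (Finset.mem_singleton_self i) le_rfl) le_sup_right
      · have : u = ∅ := Finset.card_eq_zero.1 (by omega)
        rw [this, 𝒮.empty_eq]
        exact le_sup_left

theorem S_le_of_isOn (𝒮 : DiffFieldSystem σ V A) {I : Set (Finset V)} (h : 𝒮.IsOn I)
    (X : Subfield K) (u : Finset V) (hX : ∀ v ∈ I, v ⊆ u → 𝒮.S v ≤ X) : 𝒮.S u ≤ X := by
  induction u using Finset.strongInduction with
  | H u ih =>
    by_cases hu : u ∈ I
    · exact hX u hu subset_rfl
    · rw [h u hu]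
      exact 𝒮.Sminus_le fun v hv => ih v hv fun w hw hwv => hX w hw (hwv.trans hv.1)

end DiffFieldSystem

/-- (Lemma on linear disjointness in systems.) If `𝒮` is an
`I`-system of difference fields on `V` over `A`, `u ⊆ V`, and `J` is any
collection of subsets of `V`, then `S(V)·∏_{v ∈ J ∪ I_u} S(v)^{alg}` is linearly
disjoint from `S(u)^{alg}` over `S(u)·∏_{v ∈ J_u ∪ I_u} S(v)^{alg}`. -/
theorem linear_disjointness_in_systems
    {K : Type*} [Field K] [IsAlgClosed K] (σ : K ≃+* K)
    {V : Type*} [Fintype V] [DecidableEq V]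
    (A : Subfield K) (hAperf : PerfectField A) (hAinv : A.map (σ : K →+* K) = A)
    (I : Set (Finset V)) (hI : IsSimplicialComplexOn V I)
    (𝒮 : DiffFieldSystem σ V A) (h𝒮 : 𝒮.IsOn I)
    (u : Finset V) (J : Set (Finset V)) :
    LinearDisjointOver
      (𝒮.S u ⊔ ⨆ v ∈ interFamily J u ∪ interFamily I u, algCl (𝒮.S v))
      (𝒮.S Finset.univ ⊔ ⨆ v ∈ J ∪ interFamily I u, algCl (𝒮.S v))
      (algCl (𝒮.S u)) := by
  have hAm : ∀ v, A ≤ 𝒮.S v := fun v =>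
    𝒮.empty_eq.symm.le.trans (𝒮.mono (Finset.empty_subset v))
  have hdis : LinearDisjointOver (algCl A) (algCl (𝒮.S u)) (algCl (𝒮.S uᶜ)) := by
    have h := 𝒮.indep u uᶜ disjoint_compl_right
    unfold IndependentOver at h
    rw [invCl_eq σ A hAinv] at h
    have hle : ∀ w : Finset V, algCl (𝒮.S w) ≤ algCl (invCl σ ((A ⊔ ⨆ i ∈ w, 𝒮.S {i}) ⊔ A)) :=
      fun w => (algCl_le (𝒮.S_le_algCl w)).trans (algCl_mono (le_sup_left.trans (le_invCl σ _)))
    exact h.mono (hle u) (hle uᶜ)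
  have hAc : IsAlgClosed (algCl A) := isAlgClosed_algCl A
  have hcore := core_disjoint (algCl A) (algCl (𝒮.S u)) (algCl (𝒮.S uᶜ)) (algCl_mono (hAm u))
    (algCl_mono (hAm uᶜ)) hdis (J := ↥(J ∪ I)) (fun v => algCl (𝒮.S (v ∩ u)))
    (fun v => algCl_mono (hAm _)) (fun v => algCl_mono (𝒮.mono Finset.inter_subset_right))
    (fun v => isAlgClosed_algCl _)
  have hF : ∀ v : Finset V, algCl (𝒮.S v) ≤ algCl (algCl (𝒮.S (v ∩ u)) ⊔ algCl (𝒮.S uᶜ)) := by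
    intro v
    apply algCl_le
    refine (𝒮.S_le_algCl v).trans (algCl_mono (sup_le ?_ (iSup₂_le fun i hi => ?_)))
    · exact (hAm _).trans ((le_algCl _).trans le_sup_left)
    · by_cases hiu : i ∈ u
      · refine le_trans (𝒮.mono ?_) ((le_algCl _).trans le_sup_left)
        simpa using ⟨hi, hiu⟩
      · refine le_trans (𝒮.mono ?_) ((le_algCl _).trans le_sup_right)
        simpa using hiu
  have hbase : (𝒮.S u ⊔ ⨆ v ∈ interFamily J u ∪ interFamily I u, algCl (𝒮.S v))
      = ⨆ v : ↥(J ∪ I), algCl (𝒮.S (v ∩ u)) := by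
    apply le_antisymm
    · apply sup_le
      · apply 𝒮.S_le_of_isOn h𝒮
        intro v hv hvu
        refine le_iSup_of_le (⟨v, Or.inr hv⟩ : ↥(J ∪ I)) ?_
        rw [Finset.inter_eq_left.2 hvu]
        exact le_algCl _
      · refine iSup₂_le fun w hw => ?_
        rcases hw with ⟨v, hv, rfl⟩ | ⟨v, hv, rfl⟩
        · exact le_iSup (fun v : ↥(J ∪ I) => algCl (𝒮.S (v ∩ u))) ⟨v, Or.inl hv⟩
        · exact le_iSup (fun v : ↥(J ∪ I) => algCl (𝒮.S (v ∩ u))) ⟨v, Or.inr hv⟩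
    · refine iSup_le fun v => le_trans ?_ le_sup_right
      rcases v with ⟨v, hv | hv⟩
      · exact le_iSup₂_of_le (v ∩ u) (Or.inl ⟨v, hv, rfl⟩) le_rfl
      · exact le_iSup₂_of_le (v ∩ u) (Or.inr ⟨v, hv, rfl⟩) le_rfl
  rw [hbase]
  refine hcore.mono ?_ le_rfl
  have hle : ∀ v ∈ J ∪ I, algCl (𝒮.S v) ≤
      ⨆ v : ↥(J ∪ I), algCl (algCl (𝒮.S (v ∩ u)) ⊔ algCl (𝒮.S uᶜ)) := fun v hv =>
    (hF v).trans (le_iSup (fun v : ↥(J ∪ I) => algCl (algCl (𝒮.S (v ∩ u)) ⊔ algCl (𝒮.S uᶜ))) ⟨v, hv⟩)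
  apply sup_le
  · apply 𝒮.S_le_of_isOn h𝒮
    intro v hv _
    exact (le_algCl _).trans (hle v (Or.inr hv))
  · refine iSup₂_le fun w hw => ?_
    rcases hw with hw | ⟨v, hv, rfl⟩
    · exact hle w (Or.inl hw)
    · exact (algCl_mono (𝒮.mono Finset.inter_subset_left)).trans (hle v (Or.inr hv))
end
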